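/- In every right universal Osborn loop Q, the identity ((uz)·(u\((yz)·((uz)\u))))·z = (uz)·(u\(yz)) holds for all y,z,u ∈ Q. -/

import Mathlib

/-- A loop: a set with multiplication, left division `ld`, right division `rd`
and a two-sided identity `e`. -/
structure LoopStr (Q : Type*) where
  mul : Q → Q → Q
  ld : Q → Q → Q
  rd : Q → Q → Q
  e : Q
  mul_ld : ∀ x y, mul x (ld x y) = y
  rd_mul : ∀ x y, mul (rd y x) x = y
  ld_mul : ∀ x y, ld x (mul x y) = y
  mul_rd : ∀ x y, rd (mul y x) x = y
  one_mul : ∀ x, mul e x = x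
  mul_one : ∀ x, mul x e = x

namespace LoopStr

variable {Q : Type*} (L : LoopStr Q)

/-- The left inverse `x^λ` of `x`, i.e. the unique element with `x^λ · x = e`. -/
def lam (x : Q) : Q := L.rd L.e x

/-- The right inverse `x^ρ` of `x`, i.e. the unique element with `x · x^ρ = e`. -/
def rho (x : Q) : Q := L.ld x L.e

/-- A binary operation `op` with identity `e'` is Osborn if, whenever `xl` is a
left inverse of `x` w.r.t. `op`, the Osborn identity
`x(yz·x) = (x(y·x^λ·x))·(zx)` holds. -/
def IsOsbornOp (op : Q → Q → Q) (e' : Q) : Prop :=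
  ∀ x y z xl, op xl x = e' →
    op x (op (op y z) x) = op (op x (op (op y xl) x)) (op z x)

/-- The `u,v`-principal isotope: `x ∗ y = (x/v)·(u\y)`; its identity is `u·v`. -/
def isotope (u v : Q) : Q → Q → Q := fun x y => L.mul (L.rd x v) (L.ld u y)

/-- `Q` is a universal Osborn loop: every `u,v`-principal isotope is Osborn. -/
def Universal : Prop := ∀ u v, IsOsbornOp (L.isotope u v) (L.mul u v)

/-- `Q` is a left universal Osborn loop: every left principal isotope
`x ∗ y = (x/v)·y` (identity `v`) is Osborn. -/
def LeftUniversal : Prop := ∀ v, IsOsbornOp (fun x y => L.mul (L.rd x v) y) v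

/-- `Q` is a right universal Osborn loop: every right principal isotope
`x ∗ y = x·(u\y)` (identity `u`) is Osborn. -/
def RightUniversal : Prop := ∀ u, IsOsbornOp (fun x y => L.mul x (L.ld u y)) u

end LoopStr

open LoopStr

/-!
Let `x^λ` be the left inverse of `x` in an Osborn loop. The factor `x(y·x^λ·x)` of the Osborn
identity is `x^λ\y`, and `x(y·x) = (x^λ\y)·x`, so the identity becomes
`(x^λ\y)·zx = (x^λ\yz)·x`. For `z = x^λ` this is `x^λ\y = (x^λ\(y·x^λ))·x`.
In the right isotope with identity `uz`, the element `u` is the left inverse of `uz·z`, and this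
last identity is the required one with `y` in place of `yz`.
-/

namespace LoopStr

variable {Q : Type*} {L : LoopStr Q}

theorem mul_right_cancel {a b x : Q} (h : L.mul a x = L.mul b x) : a = b := by
  rw [← L.mul_rd x a, h, L.mul_rd]

theorem ld_self (x : Q) : L.ld x x = L.e := by
  simpa only [L.mul_one] using L.ld_mul x L.e

namespace IsOsbornOp

variable {x xl : Q}

theorem mul_leftInv_mul_leftInv_mul (hL : IsOsbornOp L.mul L.e) (hx : L.mul xl x = L.e) :
    L.mul x (L.mul (L.mul xl xl) x) = L.e := by
  have hxl := hL x xl L.e xl hx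
  rw [L.mul_one, hx, L.mul_one, L.one_mul] at hxl
  exact mul_right_cancel (hxl.symm.trans (L.one_mul x).symm)

theorem mul_leftInv_mul_mul (hL : IsOsbornOp L.mul L.e) (hx : L.mul xl x = L.e) (y : Q) :
    L.mul x (L.mul (L.mul xl y) x) = L.mul y x := by
  rw [hL x xl y xl hx, hL.mul_leftInv_mul_leftInv_mul hx, L.one_mul]

theorem leftInv_ld_mul_self (hL : IsOsbornOp L.mul L.e) (hx : L.mul xl x = L.e) (y : Q) :
    L.mul (L.ld xl y) x = L.mul x (L.mul y x) := by
  rw [← hL.mul_leftInv_mul_mul hx, L.mul_ld]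

theorem mul_mul_leftInv_mul (hL : IsOsbornOp L.mul L.e) (hx : L.mul xl x = L.e) (y : Q) :
    L.mul x (L.mul (L.mul y xl) x) = L.ld xl y := by
  refine mul_right_cancel (L := L) (x := x) ?_
  have hy := hL x y L.e xl hx
  rw [L.mul_one, L.one_mul] at hy
  rw [← hy, hL.leftInv_ld_mul_self hx]

theorem leftInv_ld_mul_mul (hL : IsOsbornOp L.mul L.e) (hx : L.mul xl x = L.e) (y z : Q) :
    L.mul (L.ld xl y) (L.mul z x) = L.mul (L.ld xl (L.mul y z)) x := by
  rw [hL.leftInv_ld_mul_self hx, ← hL.mul_mul_leftInv_mul hx, hL x y z xl hx]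

theorem leftInv_ld_mul_leftInv_mul (hL : IsOsbornOp L.mul L.e) (hx : L.mul xl x = L.e) (y : Q) :
    L.mul (L.ld xl (L.mul y xl)) x = L.ld xl y := by
  rw [← hL.leftInv_ld_mul_mul hx, hx, L.mul_one]

end IsOsbornOp

variable (L) in
/-- The right principal isotope `x ∗ y = x·(u\y)` as a loop, with identity `u`. -/
def rightIsotope (u : Q) : LoopStr Q where
  mul x y := L.mul x (L.ld u y)
  ld x y := L.mul u (L.ld x y)
  rd x y := L.rd x (L.ld u y)
  e := u
  mul_ld x y := by rw [L.ld_mul, L.mul_ld]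
  rd_mul x y := L.rd_mul (L.ld u x) y
  ld_mul x y := by rw [L.ld_mul, L.mul_ld]
  mul_rd x y := L.mul_rd (L.ld u x) y
  one_mul x := L.mul_ld u x
  mul_one x := by rw [ld_self, L.mul_one]

end LoopStr

theorem right_universal_osborn_OSI012_general {Q : Type*} (L : LoopStr Q) {u z : Q}
    (h : IsOsbornOp (L.rightIsotope (L.mul u z)).mul (L.mul u z)) (y : Q) :
    L.mul (L.mul (L.mul u z) (L.ld u (L.mul y (L.ld (L.mul u z) u)))) z =
      L.mul (L.mul u z) (L.ld u y) := by
  let M := L.rightIsotope (L.mul u z)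
  have mul_translate (a : Q) : M.mul a (L.mul (L.mul u z) z) = L.mul a z :=
    congrArg (L.mul a) (L.ld_mul (L.mul u z) z)
  rw [← mul_translate]
  exact IsOsbornOp.leftInv_ld_mul_leftInv_mul (L := M) h (mul_translate u) y

theorem right_universal_osborn_OSI012 {Q : Type*} (L : LoopStr Q)
    (h : L.RightUniversal) (y z u : Q) :
    L.mul
      (L.mul (L.mul u z)
        (L.ld u (L.mul (L.mul y z) (L.ld (L.mul u z) u)))) z =
      L.mul (L.mul u z) (L.ld u (L.mul y z)) :=
  right_universal_osborn_OSI012_general L (h (L.mul u z)) (L.mul y z)
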